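/- arXiv:0911.1948 — 3 statements merged into one kernel-verified Lean document; each statement's English description precedes it below -/
import Mathlib

section
/- Let S be a k-subspace of End_k(V). If S^n = 0 for some natural number n, then S^N = 0, where N = dim_k V. (This is the linear-algebra content of the statement that a nilpotent finite-dimensional representation V of a quiver satisfies V · ℂQ_{≥N} = 0 for N = dim_ℂ V.) -/
/-!
The subspaces `S ^ i • ⊤ = S ^ i V` form a descending chain in `V`, each being obtained from the
previous one by applying `S •`. If two consecutive terms agree, the chain is constant from there
on, hence zero since `S ^ n = 0`. So the dimension drops by at least one at each step until it
reaches `0`, and `S ^ N V = 0` for `N = dim V`.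
-/

theorem mul_smul_submodule {k V : Type*} [Field k] [AddCommGroup V] [Module k V]
    (A B : Submodule k (Module.End k V)) (W : Submodule k V) : (A * B) • W = A • B • W :=
  Submodule.smul_assoc A B W

/-- Each step of the chain `S ^ i V` loses at least one dimension until it reaches `0`;
the truncated subtraction covers both regimes. -/
theorem finrank_pow_smul_top_le {k V : Type*} [Field k] [AddCommGroup V] [Module k V]
    [FiniteDimensional k V] (S : Submodule k (Module.End k V)) {n : ℕ} (hn : S ^ n = ⊥) (i : ℕ) :
    Module.finrank k ↥(S ^ i • (⊤ : Submodule k V)) ≤ Module.finrank k V - i := by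
  induction i with
  | zero => exact Submodule.finrank_le _
  | succ i ih =>
    have hle : S ^ (i + 1) • (⊤ : Submodule k V) ≤ S ^ i • ⊤ := by
      rw [pow_succ, mul_smul_submodule]
      exact Submodule.smul_mono le_rfl le_top
    rcases hle.lt_or_eq with hlt | heq
    · have := Submodule.finrank_lt_finrank_of_lt hlt
      omega
    · have hconst : ∀ j, S ^ (j + i) • (⊤ : Submodule k V) = S ^ i • ⊤ := by
        intro j
        induction j with
        | zero => simp
        | succ j ihj =>
          rw [show j + 1 + i = 1 + (j + i) by ring, pow_add, mul_smul_submodule, ihj, ← mul_smul_submodule,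
            ← pow_add, add_comm 1 i, heq]
      have hbot : S ^ i • (⊤ : Submodule k V) = ⊥ := by
        rw [← hconst n, pow_add, hn, mul_smul_submodule, Submodule.bot_smul]
      rw [heq, hbot, finrank_bot]
      exact Nat.zero_le _

/-- if a `k`-subspace `S` of `End_k(V)` satisfies `S ^ n = 0` for
some `n`, then `S ^ N = 0` where `N = dim_k V`. -/
theorem stmt6 (k V : Type*) [Field k] [AddCommGroup V] [Module k V]
    [FiniteDimensional k V]
    (S : Submodule k (Module.End k V))
    (h : ∃ n : ℕ, S ^ n = ⊥) :
    S ^ (Module.finrank k V) = ⊥ := by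
  obtain ⟨n, hn⟩ := h
  have hrank := finrank_pow_smul_top_le S hn (Module.finrank k V)
  rw [Nat.sub_self, Nat.le_zero, Submodule.finrank_eq_zero] at hrank
  rw [eq_bot_iff]
  intro f hf
  rw [Submodule.mem_bot]
  ext v
  have hv : f • v ∈ S ^ Module.finrank k V • (⊤ : Submodule k V) :=
    Submodule.smul_mem_smul hf Submodule.mem_top
  rw [hrank, Submodule.mem_bot] at hv
  simpa using hv
end

section
/- Suppose there exists n ≥ 1 such that the composition along every path of length n in the representation (V, x) is the zero map (i.e., the representation is nilpotent). Then the composition along every path of length N is the zero map, where N = Σ_{i ∈ I} dim_ℂ V(i) is the total dimension of the representation. -/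
/-!
Regard every edge `e` as an endomorphism `f e` of the total space `W = Π i, V i`, and let
`T U = ⨆ e, f e '' U`, a monotone operator on subspaces of `W`. The iterate `T^[k] ⊤` is the span of
the images of all words of length `k` (`iterate_edgeStep_le`, `range_wordComp_le`); words that are
not paths contribute nothing (`wordComp_eq_zero_of_not_isPath`). Nilpotency therefore says
`T^[n] ⊤ = ⊥` for some `n`. The chain `⊤ ≥ T ⊤ ≥ T (T ⊤) ≥ ⋯` is stationary from its first
equality on, hence it decreases strictly until it reaches `⊥`, which takes at most
`dim W = ∑ i, dim V i` steps (`iterate_finrank_top_eq_bot`).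
-/

/-- The endomorphism of the total space `Π i, V i` of a quiver representation
induced by the linear map `x e : V (σ e) → V (τ e)` attached to an edge `e`:
project to the `σ e` component, apply `x e`, include at the `τ e` component. -/
def edgeMap {I E : Type*} [Fintype I] [Fintype E] [DecidableEq I]
    (σ τ : E → I) (V : I → Type*)
    [∀ i, AddCommGroup (V i)] [∀ i, Module ℂ (V i)]
    (x : ∀ e : E, V (σ e) →ₗ[ℂ] V (τ e)) (e : E) :
    (∀ i, V i) →ₗ[ℂ] (∀ i, V i) :=
  (LinearMap.single ℂ V (τ e)) ∘ₗ (x e) ∘ₗ (LinearMap.proj (σ e))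

/-- Composition along a word `a : Fin n → E` of edges:
`x_{a (n-1)} ∘ ⋯ ∘ x_{a 0}`, as an endomorphism of the total space. -/
def wordComp {I E : Type*} [Fintype I] [Fintype E] [DecidableEq I]
    (σ τ : E → I) (V : I → Type*)
    [∀ i, AddCommGroup (V i)] [∀ i, Module ℂ (V i)]
    (x : ∀ e : E, V (σ e) →ₗ[ℂ] V (τ e)) :
    (n : ℕ) → (Fin n → E) → ((∀ i, V i) →ₗ[ℂ] (∀ i, V i))
  | 0, _ => LinearMap.id
  | n + 1, a => edgeMap σ τ V x (a (Fin.last n)) ∘ₗ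
      wordComp σ τ V x n (fun k => a k.castSucc)

/-- `a : Fin n → E` is a path in the quiver: consecutive edges are composable. -/
def IsPath {I E : Type*} (σ τ : E → I) {n : ℕ} (a : Fin n → E) : Prop :=
  ∀ (k : ℕ) (h : k + 1 < n), τ (a ⟨k, Nat.lt_of_succ_lt h⟩) = σ (a ⟨k + 1, h⟩)

/-- A monotone operator on subspaces that reaches `⊥` from `⊤` under iteration does so within
`finrank` many steps. -/
theorem iterate_finrank_top_eq_bot {W : Type*} [AddCommGroup W] [Module ℂ W]
    [FiniteDimensional ℂ W] (T : Submodule ℂ W → Submodule ℂ W) (hT : Monotone T)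
    (n : ℕ) (hn : T^[n] ⊤ = ⊥) : T^[Module.finrank ℂ W] ⊤ = ⊥ := by
  have hanti : ∀ k, T^[k + 1] ⊤ ≤ T^[k] ⊤ := fun k => by
    rw [Function.iterate_succ_apply]
    exact hT.iterate k le_top
  have key : ∀ k, T^[k] ⊤ = ⊥ ∨
      Module.finrank ℂ (T^[k] ⊤ : Submodule ℂ W) + k ≤ Module.finrank ℂ W := by
    intro k
    induction k with
    | zero => exact Or.inr (Submodule.finrank_le _)
    | succ k ih =>
      rcases ih with h | h
      · left
        exact le_bot_iff.1 ((hanti k).trans h.le)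
      · rcases (hanti k).lt_or_eq with hlt | heq
        · right
          have := Submodule.finrank_lt_finrank_of_lt hlt
          omega
        · -- A fixed point of `T` lies below `T^[n] ⊤ = ⊥`.
          left
          have hfix : T (T^[k] ⊤) = T^[k] ⊤ := by
            rwa [Function.iterate_succ_apply'] at heq
          have hle : T^[n] (T^[k] ⊤) ≤ T^[n] ⊤ := hT.iterate n le_top
          rw [Function.iterate_fixed hfix, hn] at hle
          exact heq.trans (le_bot_iff.1 hle)
  rcases key (Module.finrank ℂ W) with h | h
  · exact h
  · exact Submodule.finrank_eq_zero.1 (by omega)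

section

variable {I E : Type*} [Fintype I] [Fintype E] [DecidableEq I]
  (σ τ : E → I) (V : I → Type*)
  [∀ i, AddCommGroup (V i)] [∀ i, Module ℂ (V i)]
  (x : ∀ e : E, V (σ e) →ₗ[ℂ] V (τ e))

theorem edgeMap_comp_edgeMap_eq_zero {e f : E} (h : τ e ≠ σ f) :
    edgeMap σ τ V x f ∘ₗ edgeMap σ τ V x e = 0 := by
  ext1 i
  ext v j
  simp [edgeMap, Pi.single_eq_of_ne h.symm]

theorem wordComp_eq_zero_of_not_isPath (n : ℕ) (a : Fin n → E) (ha : ¬ IsPath σ τ a) :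
    wordComp σ τ V x n a = 0 := by
  induction n with
  | zero => exact absurd (fun k h => absurd h (Nat.not_lt_zero _)) ha
  | succ n ih =>
    by_cases hp : IsPath σ τ (fun k : Fin n => a k.castSucc)
    · -- The initial word is a path, so only the last two edges can fail to be composable.
      cases n with
      | zero => exact absurd (fun k h => absurd h (by omega)) ha
      | succ m =>
        have hne : τ (a (Fin.last m).castSucc) ≠ σ (a (Fin.last (m + 1))) := by
          intro heq
          apply ha
          intro k hk
          rcases Nat.lt_or_ge (k + 1) (m + 1) with h | h
          · exact hp k h
          · obtain rfl : k = m := by omega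
            exact heq
        change edgeMap σ τ V x _ ∘ₗ (edgeMap σ τ V x _ ∘ₗ _) = 0
        rw [← LinearMap.comp_assoc, edgeMap_comp_edgeMap_eq_zero σ τ V x hne,
          LinearMap.zero_comp]
    · change edgeMap σ τ V x _ ∘ₗ wordComp σ τ V x n _ = 0
      rw [ih _ hp, LinearMap.comp_zero]

/-- The operator `U ↦ ∑ₑ xₑ(U)` on subspaces of the total space. -/
def edgeStep (U : Submodule ℂ (∀ i, V i)) : Submodule ℂ (∀ i, V i) :=
  ⨆ e, U.map (edgeMap σ τ V x e)

theorem edgeStep_mono : Monotone (edgeStep σ τ V x) :=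
  fun _ _ h => iSup_mono fun _ => Submodule.map_mono h

theorem range_wordComp_le (n : ℕ) (a : Fin n → E) :
    LinearMap.range (wordComp σ τ V x n a) ≤ (edgeStep σ τ V x)^[n] ⊤ := by
  induction n with
  | zero => exact le_top
  | succ n ih =>
    rw [Function.iterate_succ_apply']
    change LinearMap.range (edgeMap σ τ V x _ ∘ₗ wordComp σ τ V x n _) ≤ _
    rw [LinearMap.range_comp]
    exact (Submodule.map_mono (ih _)).trans
      (le_iSup (fun e => Submodule.map (edgeMap σ τ V x e) _) (a (Fin.last n)))

theorem iterate_edgeStep_le (n : ℕ) :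
    (edgeStep σ τ V x)^[n] ⊤ ≤ ⨆ a : Fin n → E, LinearMap.range (wordComp σ τ V x n a) := by
  induction n with
  | zero =>
    refine le_iSup_of_le (fun k => k.elim0) ?_
    change _ ≤ LinearMap.range LinearMap.id
    rw [LinearMap.range_id]
    exact le_top
  | succ n ih =>
    rw [Function.iterate_succ_apply']
    refine (edgeStep_mono σ τ V x ih).trans (iSup_le fun e => ?_)
    rw [Submodule.map_iSup]
    refine iSup_le fun a => le_iSup_of_le (Fin.snoc (α := fun _ => E) a e) ?_
    change _ ≤ LinearMap.range (edgeMap σ τ V x _ ∘ₗ wordComp σ τ V x n _)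
    simp only [Fin.snoc_last, Fin.snoc_castSucc, LinearMap.range_comp, le_refl]

end

/-- if for some `n ≥ 1` the composition along every path of length
`n` in the representation `(V, x)` is zero, then the composition along every
path of length `N = Σ_i dim_ℂ V i` is zero. -/
theorem stmt7 {I E : Type*} [Fintype I] [Fintype E] [DecidableEq I]
    (σ τ : E → I) (V : I → Type*)
    [∀ i, AddCommGroup (V i)] [∀ i, Module ℂ (V i)]
    [∀ i, FiniteDimensional ℂ (V i)]
    (x : ∀ e : E, V (σ e) →ₗ[ℂ] V (τ e))
    (hnil : ∃ n : ℕ, 1 ≤ n ∧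
      ∀ a : Fin n → E, IsPath σ τ a → wordComp σ τ V x n a = 0) :
    ∀ a : Fin (∑ i : I, Module.finrank ℂ (V i)) → E,
      IsPath σ τ a →
        wordComp σ τ V x (∑ i : I, Module.finrank ℂ (V i)) a = 0 := by
  obtain ⟨n, -, hn⟩ := hnil
  intro a _
  have hbot : (edgeStep σ τ V x)^[n] ⊤ = ⊥ := by
    refine le_bot_iff.1 ((iterate_edgeStep_le σ τ V x n).trans (iSup_le fun b => ?_))
    have hb : wordComp σ τ V x n b = 0 := by
      by_cases hp : IsPath σ τ b
      · exact hn b hp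
      · exact wordComp_eq_zero_of_not_isPath σ τ V x n b hp
    rw [hb, LinearMap.range_zero]
  have hN := iterate_finrank_top_eq_bot _ (edgeStep_mono σ τ V x) n hbot
  rw [Module.finrank_pi_fintype] at hN
  exact LinearMap.range_eq_bot.1 (le_bot_iff.1 ((range_wordComp_le σ τ V x _ a).trans hN.le))
end

section
/- Suppose the family p generates the representation (V, x). If γ_i : V(i) → V(i) is a family of ℂ-linear maps satisfying γ_{τ e} ∘ x_e = x_e ∘ γ_{σ e} for every edge e ∈ E and γ_i ∘ p_i = p_i for every i ∈ I, then γ_i is the identity map for every i ∈ I. (Hence the gauge group ∏_i GL(V_i) acts freely on the stable locus of framed representations: the stabilizer of any point (x, p) in which p generates is trivial.) -/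
/-- if the family `p` generates the representation `(V, x)` and the
family `γ` of endomorphisms commutes with all the `x e` and fixes all the `p i`,
then every `γ i` is the identity.  (The gauge group acts freely on the stable
locus.) -/
theorem stmt8 {I E : Type*} [Fintype I] [Fintype E]
    (σ τ : E → I) (V : I → Type*)
    [∀ i, AddCommGroup (V i)] [∀ i, Module ℂ (V i)]
    [∀ i, FiniteDimensional ℂ (V i)]
    (x : ∀ e : E, V (σ e) →ₗ[ℂ] V (τ e))
    (D : I → Type*) [∀ i, AddCommGroup (D i)] [∀ i, Module ℂ (D i)]
    (p : ∀ i : I, D i →ₗ[ℂ] V i)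
    (hgen : ∀ W : ∀ i : I, Submodule ℂ (V i),
      (∀ i : I, LinearMap.range (p i) ≤ W i) →
      (∀ e : E, Submodule.map (x e) (W (σ e)) ≤ W (τ e)) →
      ∀ i : I, W i = ⊤)
    (γ : ∀ i : I, V i →ₗ[ℂ] V i)
    (hcomm : ∀ e : E, γ (τ e) ∘ₗ x e = x e ∘ₗ γ (σ e))
    (hfix : ∀ i : I, γ i ∘ₗ p i = p i) :
    ∀ i : I, γ i = LinearMap.id := by
  intro i
  -- The fixed subspaces of `γ` form a subrepresentation containing the image of `p`.
  have h := hgen (fun j => LinearMap.eqLocus (γ j) LinearMap.id) ?_ ?_ i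
  · exact LinearMap.eqLocus_eq_top.mp h
  · rintro j _ ⟨d, rfl⟩
    exact LinearMap.congr_fun (hfix j) d
  · rintro e _ ⟨v, hv, rfl⟩
    have hv' : γ (σ e) v = v := hv
    have hc : γ (τ e) (x e v) = x e (γ (σ e) v) := LinearMap.congr_fun (hcomm e) v
    rw [hv'] at hc
    exact hc
end
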